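/- arXiv:2508.14813 — 2 statements merged into one kernel-verified Lean document; each statement's English description precedes it below -/
import Mathlib

section
/- Orthonormal basis of the Filipović space induced by an orthonormal basis of L²: let (g_n)_{n≥0} be an orthonormal basis of L²((0,∞)). Define f₁ ≡ 1 (the w-pair (1, 0)) and, for n ≥ 1, f_{n+1}(x) := ∫₀ˣ g_{n−1}(s) w(s)^{−1/2} ds, with density g_{n−1} w^{−1/2}. Then: (a) each (f_m, density) is a w-pair and ⟨f_i, f_j⟩_w = 1 if i = j and 0 otherwise; (b) the family is total: if a w-pair (f, q) satisfies ⟨f, f_m⟩_w = 0 for all m ≥ 1, then f(0) = 0 and q = 0 almost everywhere, hence f ≡ 0. -/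
open MeasureTheory Set

/-- `(f, g)` is a `w`-pair: `g` is measurable with `∫₀^∞ w g² < ∞`, and
`f x = f 0 + ∫₀ˣ g` for all `x ≥ 0`. -/
def IsWPair (w f g : ℝ → ℝ) : Prop :=
  Measurable g ∧ IntegrableOn (fun s => w s * g s ^ 2) (Ioi 0) ∧
    ∀ x, 0 ≤ x → f x = f 0 + ∫ s in (0:ℝ)..x, g s

/-! The map `f ↦ (f 0, f')` identifies the Filipović space with `ℝ ⊕ L²(w dx)`, and multiplication
by `w^{-1/2}` is a unitary map `L²(dx) → L²(w dx)` with inverse multiplication by `√w`. The family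
in the theorem is the image of the basis `(1, 0), (0, g 0), (0, g 1), …` of `ℝ ⊕ L²(dx)`. -/

theorem rpow_neg_one_div_two_eq_inv_sqrt {a : ℝ} (ha : 0 ≤ a) : a ^ (-(1 : ℝ) / 2) = (√a)⁻¹ := by
  rw [neg_div, Real.rpow_neg ha, Real.sqrt_eq_rpow]

section WeightedL2

variable {α : Type*} [MeasurableSpace α] {μ : Measure α} {w q u v : α → ℝ}

/-- The image `u w^{-1/2}` of `u` under the unitary map `L²(μ) → L²(w μ)`; the power is written as
in the theorem. -/
noncomputable def weightedDensity (w u : α → ℝ) : α → ℝ :=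
  fun s => u s * w s ^ (-(1 : ℝ) / 2)

theorem measurable_weightedDensity (hw : Measurable w) (hu : Measurable u) :
    Measurable (weightedDensity w u) :=
  hu.mul (hw.pow_const _)

theorem sqrt_mul_weightedDensity_ae_eq (hw : ∀ᵐ s ∂μ, 0 < w s) :
    (fun s => √(w s) * weightedDensity w u s) =ᵐ[μ] u := by
  filter_upwards [hw] with s hs
  have hsqrt : √(w s) ≠ 0 := (Real.sqrt_pos.2 hs).ne'
  rw [weightedDensity, rpow_neg_one_div_two_eq_inv_sqrt hs.le]
  field_simp

theorem integral_mul_mul_weightedDensity (hw : ∀ᵐ s ∂μ, 0 ≤ w s) :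
    ∫ s, w s * q s * weightedDensity w u s ∂μ = ∫ s, u s * (√(w s) * q s) ∂μ := by
  refine integral_congr_ae ?_
  filter_upwards [hw] with s hs
  rw [weightedDensity, rpow_neg_one_div_two_eq_inv_sqrt hs]
  linear_combination q s * u s * Real.div_sqrt (x := w s)

theorem integral_mul_weightedDensity_mul_weightedDensity (hw : ∀ᵐ s ∂μ, 0 < w s) :
    ∫ s, w s * weightedDensity w u s * weightedDensity w v s ∂μ = ∫ s, u s * v s ∂μ := by
  rw [integral_mul_mul_weightedDensity (hw.mono fun _ => le_of_lt)]
  refine integral_congr_ae ?_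
  filter_upwards [sqrt_mul_weightedDensity_ae_eq (u := u) hw] with s hu
  rw [hu, mul_comm]

theorem memLp_two_sqrt_mul_iff (hw : ∀ᵐ s ∂μ, 0 ≤ w s) (hw_meas : AEStronglyMeasurable w μ)
    (hq_meas : AEStronglyMeasurable q μ) :
    MemLp (fun s => √(w s) * q s) 2 μ ↔ Integrable (fun s => w s * q s ^ 2) μ := by
  have hmeas : AEStronglyMeasurable (fun s => √(w s) * q s) μ :=
    (Real.continuous_sqrt.comp_aestronglyMeasurable hw_meas).mul hq_meas
  rw [memLp_two_iff_integrable_sq hmeas]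
  refine integrable_congr ?_
  filter_upwards [hw] with s hs
  rw [mul_pow, Real.sq_sqrt hs]

theorem integrable_mul_weightedDensity_sq (hw : ∀ᵐ s ∂μ, 0 < w s) (hu : MemLp u 2 μ) :
    Integrable (fun s => w s * weightedDensity w u s ^ 2) μ := by
  refine hu.integrable_sq.congr ?_
  filter_upwards [hw, sqrt_mul_weightedDensity_ae_eq (u := u) hw] with s hs hu
  rw [← hu, mul_pow, Real.sq_sqrt hs.le]

theorem ae_eq_zero_of_integral_mul_mul_weightedDensity_eq_zero {ι : Type*} {g : ι → α → ℝ}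
    (hw : ∀ᵐ s ∂μ, 0 < w s) (hw_meas : AEStronglyMeasurable w μ)
    (hg_total : ∀ h : α → ℝ, MemLp h 2 μ → (∀ i, ∫ s, g i s * h s ∂μ = 0) → h =ᵐ[μ] 0)
    (hq_meas : AEStronglyMeasurable q μ) (hq : Integrable (fun s => w s * q s ^ 2) μ)
    (horth : ∀ i, ∫ s, w s * q s * weightedDensity w (g i) s ∂μ = 0) : q =ᵐ[μ] 0 := by
  have hw_nonneg : ∀ᵐ s ∂μ, 0 ≤ w s := hw.mono fun _ => le_of_lt
  have hsqrt : (fun s => √(w s) * q s) =ᵐ[μ] 0 :=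
    hg_total _ ((memLp_two_sqrt_mul_iff hw_nonneg hw_meas hq_meas).2 hq) fun i =>
      (integral_mul_mul_weightedDensity hw_nonneg).symm.trans (horth i)
  filter_upwards [hw, hsqrt] with s hs hq0
  exact (mul_eq_zero.1 hq0).resolve_left (Real.sqrt_pos.2 hs).ne'

theorem integrable_of_integrable_mul_sq (hw : ∀ᵐ s ∂μ, 0 < w s)
    (hw_inv : Integrable (fun s => (w s)⁻¹) μ) (hq_meas : AEStronglyMeasurable q μ)
    (hq : Integrable (fun s => w s * q s ^ 2) μ) : Integrable q μ := by
  refine (hq.add hw_inv).mono' hq_meas ?_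
  filter_upwards [hw] with s hs
  have hamgm : 2 * |q s| ≤ w s * q s ^ 2 + (w s)⁻¹ := by
    have hsq : 0 ≤ (w s)⁻¹ * (w s * |q s| - 1) ^ 2 := by positivity
    calc 2 * |q s| ≤ 2 * |q s| + (w s)⁻¹ * (w s * |q s| - 1) ^ 2 := le_add_of_nonneg_right hsq
      _ = w s * |q s| ^ 2 + (w s)⁻¹ := by field_simp; ring
      _ = w s * q s ^ 2 + (w s)⁻¹ := by rw [sq_abs]
  simp only [Real.norm_eq_abs, Pi.add_apply]
  linarith [abs_nonneg (q s)]

end WeightedL2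

section Filipovic

variable {w f q u : ℝ → ℝ}

/-- The inner product `⟨f, h⟩_w` of the Filipović space. The densities `q` of `f` and `p` of `h`
are separate arguments, as in `IsWPair`. -/
noncomputable def filipovicInner (w f q h p : ℝ → ℝ) : ℝ :=
  f 0 * h 0 + ∫ s in Ioi (0 : ℝ), w s * q s * p s

/-- The element of the Filipović space that vanishes at `0` and has density `u w^{-1/2}`. -/
noncomputable def weightedPrimitive (w u : ℝ → ℝ) : ℝ → ℝ :=
  fun x => ∫ s in (0 : ℝ)..x, weightedDensity w u s

theorem weightedPrimitive_zero : weightedPrimitive w u 0 = 0 :=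
  intervalIntegral.integral_same

theorem filipovicInner_one_right : filipovicInner w f q 1 0 = f 0 := by
  simp [filipovicInner]

theorem filipovicInner_one_left : filipovicInner w 1 0 f q = f 0 := by
  simp [filipovicInner]

theorem filipovicInner_weightedPrimitive_right :
    filipovicInner w f q (weightedPrimitive w u) (weightedDensity w u) =
      ∫ s in Ioi (0 : ℝ), w s * q s * weightedDensity w u s := by
  rw [filipovicInner, weightedPrimitive_zero, mul_zero, zero_add]

theorem isWPair_one : IsWPair w 1 0 :=
  ⟨measurable_const, by simp, by simp⟩

theorem isWPair_weightedPrimitive (hw : ∀ᵐ s ∂volume.restrict (Ioi 0), 0 < w s)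
    (hw_meas : Measurable w) (hu_meas : Measurable u) (hu : MemLp u 2 (volume.restrict (Ioi 0))) :
    IsWPair w (weightedPrimitive w u) (weightedDensity w u) :=
  ⟨measurable_weightedDensity hw_meas hu_meas, integrable_mul_weightedDensity_sq hw hu,
    fun x _ => by rw [weightedPrimitive_zero, zero_add, weightedPrimitive]⟩

theorem IsWPair.intervalIntegrable (hfq : IsWPair w f q)
    (hw : ∀ᵐ s ∂volume.restrict (Ioi 0), 0 < w s) {x : ℝ} (hx : 0 ≤ x)
    (hw_inv : IntegrableOn (fun s => (w s)⁻¹) (Ioc 0 x)) : IntervalIntegrable q volume 0 x := by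
  rw [intervalIntegrable_iff_integrableOn_Ioc_of_le hx]
  exact integrable_of_integrable_mul_sq
    (ae_restrict_of_ae_restrict_of_subset Ioc_subset_Ioi_self hw) hw_inv
    hfq.1.aestronglyMeasurable (hfq.2.1.mono_set Ioc_subset_Ioi_self)

theorem IsWPair.eq_apply_zero_of_ae_eq_zero (hfq : IsWPair w f q)
    (hq : q =ᵐ[volume.restrict (Ioi 0)] 0) {x : ℝ} (hx : 0 ≤ x) : f x = f 0 := by
  rw [hfq.2.2 x hx, intervalIntegral.integral_of_le hx, integral_eq_zero_of_ae, add_zero]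
  exact ae_restrict_of_ae_restrict_of_subset Ioc_subset_Ioi_self hq

end Filipovic

/-- The conclusion `IntervalIntegrable` ensures that the interval integrals defining `F` and tested
by `IsWPair` are not the junk value `0`. -/
theorem filipovic_orthonormal_basis_general
    (w : ℝ → ℝ) (hw_meas : Measurable w) (hw_pos : ∀ᵐ s ∂volume.restrict (Ioi 0), 0 < w s)
    (hw_inv : ∀ x, IntegrableOn (fun s => (w s)⁻¹) (Ioc 0 x))
    (g : ℕ → ℝ → ℝ) (hg_meas : ∀ n, Measurable (g n))
    (hg_L2 : ∀ n, MemLp (g n) 2 (volume.restrict (Ioi 0)))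
    (hg_on : ∀ i j, ∫ s in Ioi (0 : ℝ), g i s * g j s = if i = j then 1 else 0)
    (hg_total : ∀ h : ℝ → ℝ, MemLp h 2 (volume.restrict (Ioi 0)) →
      (∀ n, ∫ s in Ioi (0 : ℝ), g n s * h s = 0) → h =ᵐ[volume.restrict (Ioi 0)] 0)
    (F D : ℕ → ℝ → ℝ) (hF0 : F 0 = 1) (hD0 : D 0 = 0)
    (hFs : ∀ n, F (n + 1) = weightedPrimitive w (g n))
    (hDs : ∀ n, D (n + 1) = weightedDensity w (g n)) :
    ((∀ m, IsWPair w (F m) (D m) ∧ ∀ x, 0 ≤ x → IntervalIntegrable (D m) volume 0 x) ∧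
      (∀ i j, filipovicInner w (F i) (D i) (F j) (D j) = if i = j then 1 else 0)) ∧
    (∀ f q : ℝ → ℝ, IsWPair w f q → (∀ m, filipovicInner w f q (F m) (D m) = 0) →
      f 0 = 0 ∧ q =ᵐ[volume.restrict (Ioi 0)] 0 ∧ ∀ x, 0 ≤ x → f x = 0) := by
  refine ⟨⟨fun m => ?_, ?_⟩, fun f q hfq horth => ?_⟩
  · have hpair : IsWPair w (F m) (D m) := by
      cases m with
      | zero => rw [hF0, hD0]; exact isWPair_one
      | succ n =>
        rw [hFs, hDs]
        exact isWPair_weightedPrimitive hw_pos hw_meas (hg_meas n) (hg_L2 n)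
    exact ⟨hpair, fun x hx => hpair.intervalIntegrable hw_pos hx (hw_inv x)⟩
  · rintro (_ | i) (_ | j)
    · simp [hF0, hD0, filipovicInner_one_left]
    · simp [hF0, hD0, hFs, filipovicInner_one_left, weightedPrimitive_zero]
    · simp [hF0, hD0, hFs, filipovicInner_one_right, weightedPrimitive_zero]
    · simp [hFs, hDs, filipovicInner_weightedPrimitive_right,
        integral_mul_weightedDensity_mul_weightedDensity hw_pos, hg_on]
  · have hf0 : f 0 = 0 := by simpa only [hF0, hD0, filipovicInner_one_right] using horth 0
    have hq : q =ᵐ[volume.restrict (Ioi 0)] 0 :=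
      ae_eq_zero_of_integral_mul_mul_weightedDensity_eq_zero hw_pos hw_meas.aestronglyMeasurable
        hg_total hfq.1.aestronglyMeasurable hfq.2.1 fun n => by
          simpa only [hFs, hDs, filipovicInner_weightedPrimitive_right] using horth (n + 1)
    exact ⟨hf0, hq, fun x hx => (hfq.eq_apply_zero_of_ae_eq_zero hq hx).trans hf0⟩

/-- An orthonormal basis of the Filipović space induced by an orthonormal basis
`(g_n)` of `L²((0,∞))`: `f 0 ≡ 1` with density `0`, and
`f (n+1) x = ∫₀ˣ g n · w^{-1/2}` with density `g n · w^{-1/2}`.  The family is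
orthonormal and total. -/
theorem filipovic_orthonormal_basis
    (w : ℝ → ℝ) (hw_meas : Measurable w) (hw_mono : MonotoneOn w (Ici 0))
    (hw_ge : ∀ s, 0 ≤ s → 1 ≤ w s) (hw0 : w 0 = 1)
    (hw_int : IntegrableOn (fun s => (w s)⁻¹) (Ioi 0))
    -- `(g n)` is an orthonormal basis of `L²((0,∞))`:
    (g : ℕ → ℝ → ℝ) (hg_meas : ∀ n, Measurable (g n))
    (hg_L2 : ∀ n, MemLp (g n) 2 (volume.restrict (Ioi 0)))
    (hg_on : ∀ i j, ∫ s in Ioi (0:ℝ), g i s * g j s = if i = j then 1 else 0)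
    (hg_total : ∀ h : ℝ → ℝ, MemLp h 2 (volume.restrict (Ioi 0)) →
      (∀ n, ∫ s in Ioi (0:ℝ), g n s * h s = 0) →
      h =ᵐ[volume.restrict (Ioi 0)] 0)
    -- the induced family in the Filipović space and its densities:
    (F D : ℕ → ℝ → ℝ)
    (hF0 : ∀ x, F 0 x = 1) (hD0 : ∀ s, D 0 s = 0)
    (hFs : ∀ n x, F (n + 1) x = ∫ s in (0:ℝ)..x, g n s * (w s) ^ (-(1:ℝ)/2))
    (hDs : ∀ n s, D (n + 1) s = g n s * (w s) ^ (-(1:ℝ)/2)) :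
    -- (a) each `(F m, D m)` is a `w`-pair and the family is orthonormal:
    ((∀ m, IsWPair w (F m) (D m)) ∧
      (∀ i j, F i 0 * F j 0 + ∫ s in Ioi (0:ℝ), w s * D i s * D j s
        = if i = j then 1 else 0)) ∧
    -- (b) totality: a `w`-pair orthogonal to every `F m` vanishes:
    (∀ f q : ℝ → ℝ, IsWPair w f q →
      (∀ m, f 0 * F m 0 + ∫ s in Ioi (0:ℝ), w s * q s * D m s = 0) →
      f 0 = 0 ∧ q =ᵐ[volume.restrict (Ioi 0)] 0 ∧ ∀ x, 0 ≤ x → f x = 0) := by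
  have hw_pos : ∀ᵐ s ∂volume.restrict (Ioi 0), 0 < w s :=
    ae_restrict_of_forall_mem measurableSet_Ioi fun s hs => one_pos.trans_le (hw_ge s (le_of_lt hs))
  obtain ⟨⟨hpair, horthonormal⟩, htotal⟩ := filipovic_orthonormal_basis_general w hw_meas hw_pos
    (fun _ => hw_int.mono_set Ioc_subset_Ioi_self) g hg_meas hg_L2 hg_on hg_total F D
    (funext hF0) (funext hD0) (fun n => funext (hFs n)) (fun n => funext (hDs n))
  exact ⟨⟨fun m => (hpair m).1, horthonormal⟩, htotal⟩
end

section
/- Uniform boundedness of the left-shift semigroup on the Filipović space: for every w-pair (f, p) and every t ≥ 0, the shifted pair (f(·+t), p(·+t)) is again a w-pair, and f(t)² + ∫₀^∞ w(x) p(x+t)² dx ≤ (2 + K) · (f(0)² + ∫₀^∞ w(x) p(x)² dx); that is, ‖S_t f‖_w² ≤ (2 + K)‖f‖_w², uniformly in t ≥ 0. -/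
open MeasureTheory Set

/-!
Write `K = ∫₀^∞ w⁻¹`. By Cauchy–Schwarz for the splitting `p = w^(-1/2) · w^(1/2) p`, the increment
of `f` satisfies `(∫₀ᵗ p)² ≤ K ∫₀^∞ w p²`, whence `f(t)² ≤ (1 + K) ‖f‖_w²`. As `w` is nondecreasing,
`∫₀^∞ w(x) p(x + t)² dx ≤ ∫₀^∞ w(x + t) p(x + t)² dx ≤ ∫₀^∞ w p²`, which accounts for one more
`‖f‖_w²`.
-/

section WeightedCauchySchwarz

variable {α : Type*} [MeasurableSpace α] {μ : Measure α} {w p : α → ℝ}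

theorem integrable_of_integrable_mul_sq_s6 (hw : ∀ᵐ x ∂μ, 0 < w x) (hp : AEStronglyMeasurable p μ)
    (hwp : Integrable (fun x => w x * p x ^ 2) μ) (hwi : Integrable (fun x => (w x)⁻¹) μ) :
    Integrable p μ := by
  refine (hwp.add hwi).mono' hp ?_
  filter_upwards [hw] with x hx
  have amgm : 2 * |p x| * 1 ≤ w x * |p x| ^ 2 + (w x)⁻¹ * 1 ^ 2 := two_mul_le_add_mul_sq hx
  rw [sq_abs] at amgm
  simp only [Pi.add_apply, Real.norm_eq_abs]
  linarith [abs_nonneg (p x)]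

theorem sq_integral_le_integral_inv_mul_integral_mul_sq (hw : ∀ᵐ x ∂μ, 0 < w x)
    (hp : AEStronglyMeasurable p μ) (hwp : Integrable (fun x => w x * p x ^ 2) μ)
    (hwi : Integrable (fun x => (w x)⁻¹) μ) :
    (∫ x, p x ∂μ) ^ 2 ≤ (∫ x, (w x)⁻¹ ∂μ) * ∫ x, w x * p x ^ 2 ∂μ := by
  have hpi := integrable_of_integrable_mul_sq_s6 hw hp hwp hwi
  have quadratic_nonneg (c : ℝ) : 0 ≤ (∫ x, (w x)⁻¹ ∂μ) * (c * c)
      + (-2 * ∫ x, p x ∂μ) * c + ∫ x, w x * p x ^ 2 ∂μ := by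
    calc 0 ≤ ∫ x, ((w x)⁻¹ * (c * c) + -2 * p x * c + w x * p x ^ 2) ∂μ := by
          refine integral_nonneg_of_ae ?_
          filter_upwards [hw] with x hx
          have square : (w x)⁻¹ * (c * c) + -2 * p x * c + w x * p x ^ 2
              = w x * (p x - c * (w x)⁻¹) ^ 2 := by
            field_simp
            ring
          rw [Pi.zero_apply, square]
          positivity
      _ = _ := by
          have hquad : Integrable (fun x => (w x)⁻¹ * (c * c)) μ := hwi.mul_const _
          have hlin : Integrable (fun x => -2 * p x * c) μ := (hpi.const_mul _).mul_const _
          rw [integral_add (hquad.fun_add hlin) hwp, integral_add hquad hlin,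
            integral_mul_const, integral_mul_const, integral_const_mul]
  have discrim_nonpos := discrim_le_zero quadratic_nonneg
  rw [discrim] at discrim_nonpos
  linarith

end WeightedCauchySchwarz

theorem add_sq_le_one_add_mul {a b k c : ℝ} (hk : 0 ≤ k) (hc : 0 ≤ c) (hb : b ^ 2 ≤ k * c) :
    (a + b) ^ 2 ≤ (1 + k) * (a ^ 2 + c) := by
  have cross : 2 * (a * b) ≤ k * a ^ 2 + c := by
    refine two_mul_le_add_of_sq_le_mul (by positivity) hc ?_
    calc (a * b) ^ 2 = a ^ 2 * b ^ 2 := mul_pow a b 2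
      _ ≤ a ^ 2 * (k * c) := by gcongr
      _ = k * a ^ 2 * c := by ring
  linarith

section Translation

variable {E : Type*} [NormedAddCommGroup E] {g : ℝ → E} {a t : ℝ}

theorem integrableOn_Ioi_comp_add_right_iff :
    IntegrableOn (fun x => g (x + t)) (Ioi a) ↔ IntegrableOn g (Ioi (a + t)) := by
  simpa only [preimage_add_const_Ioi, add_sub_cancel_right, Function.comp_def] using
    (measurePreserving_add_right volume t).integrableOn_comp_preimage
      (measurableEmbedding_addRight t) (f := g) (s := Ioi (a + t))

theorem integral_Ioi_comp_add_right [NormedSpace ℝ E] :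
    ∫ x in Ioi a, g (x + t) = ∫ x in Ioi (a + t), g x := by
  simpa only [preimage_add_const_Ioi, add_sub_cancel_right] using
    (measurePreserving_add_right volume t).setIntegral_preimage_emb
      (measurableEmbedding_addRight t) g (Ioi (a + t))

end Translation

section MonotoneWeight

variable {w q : ℝ → ℝ} {a t : ℝ}

theorem integrableOn_Ioi_mul_comp_add_right (hw_mono : MonotoneOn w (Ioi a))
    (hw_nonneg : ∀ x ∈ Ioi a, 0 ≤ w x) (hq : AEStronglyMeasurable q)
    (hwq : IntegrableOn (fun x => w x * q x) (Ioi a)) (ht : 0 ≤ t) :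
    IntegrableOn (fun x => w x * q (x + t)) (Ioi a) := by
  have hshift : IntegrableOn (fun x => w (x + t) * q (x + t)) (Ioi a) :=
    integrableOn_Ioi_comp_add_right_iff.2
      (hwq.mono_set (Ioi_subset_Ioi (le_add_of_nonneg_right ht)))
  have hw_meas : AEStronglyMeasurable w (volume.restrict (Ioi a)) :=
    (aemeasurable_restrict_of_monotoneOn measurableSet_Ioi hw_mono).aestronglyMeasurable
  have hq_meas : AEStronglyMeasurable fun x => q (x + t) :=
    hq.comp_measurePreserving (measurePreserving_add_right volume t)
  refine Integrable.mono hshift (hw_meas.mul hq_meas.restrict) ?_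
  filter_upwards [ae_restrict_mem measurableSet_Ioi] with x hx
  have hxt : x ≤ x + t := le_add_of_nonneg_right ht
  have hxt_mem : x + t ∈ Ioi a := lt_of_lt_of_le hx hxt
  rw [norm_mul, norm_mul, Real.norm_of_nonneg (hw_nonneg x hx),
    Real.norm_of_nonneg (hw_nonneg _ hxt_mem)]
  gcongr
  exact hw_mono hx hxt_mem hxt

theorem setIntegral_Ioi_mul_comp_add_right_le (hw_mono : MonotoneOn w (Ioi a))
    (hw_nonneg : ∀ x ∈ Ioi a, 0 ≤ w x) (hq : AEStronglyMeasurable q)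
    (hq_nonneg : ∀ x ∈ Ioi a, 0 ≤ q x) (hwq : IntegrableOn (fun x => w x * q x) (Ioi a))
    (ht : 0 ≤ t) :
    ∫ x in Ioi a, w x * q (x + t) ≤ ∫ x in Ioi a, w x * q x := by
  have hsub : Ioi (a + t) ⊆ Ioi a := Ioi_subset_Ioi (le_add_of_nonneg_right ht)
  calc ∫ x in Ioi a, w x * q (x + t) ≤ ∫ x in Ioi a, w (x + t) * q (x + t) := by
        refine setIntegral_mono_on
          (integrableOn_Ioi_mul_comp_add_right hw_mono hw_nonneg hq hwq ht)
          (integrableOn_Ioi_comp_add_right_iff.2 (hwq.mono_set hsub)) measurableSet_Ioi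
          fun x hx => ?_
        have hxt : x ≤ x + t := le_add_of_nonneg_right ht
        have hxt_mem : x + t ∈ Ioi a := lt_of_lt_of_le hx hxt
        exact mul_le_mul_of_nonneg_right (hw_mono hx hxt_mem hxt) (hq_nonneg _ hxt_mem)
    _ = ∫ x in Ioi (a + t), w x * q x := integral_Ioi_comp_add_right (g := fun x => w x * q x)
    _ ≤ ∫ x in Ioi a, w x * q x := by
        refine setIntegral_mono_set hwq ?_ hsub.eventuallyLE
        filter_upwards [ae_restrict_mem measurableSet_Ioi] with x hx
        exact mul_nonneg (hw_nonneg x hx) (hq_nonneg x hx)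

end MonotoneWeight

namespace IsWPair

variable {w f p : ℝ → ℝ} {t : ℝ}

theorem integrableOn (hfp : IsWPair w f p) (hw_pos : ∀ s ∈ Ioi (0 : ℝ), 0 < w s)
    (hw_int : IntegrableOn (fun s => (w s)⁻¹) (Ioi 0)) : IntegrableOn p (Ioi 0) :=
  integrable_of_integrable_mul_sq_s6 (ae_restrict_of_forall_mem measurableSet_Ioi hw_pos)
    hfp.1.aestronglyMeasurable hfp.2.1 hw_int

theorem sq_intervalIntegral_le (hfp : IsWPair w f p) (hw_pos : ∀ s ∈ Ioi (0 : ℝ), 0 < w s)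
    (hw_int : IntegrableOn (fun s => (w s)⁻¹) (Ioi 0)) (ht : 0 ≤ t) :
    (∫ s in (0 : ℝ)..t, p s) ^ 2
      ≤ (∫ s in Ioi (0 : ℝ), (w s)⁻¹) * ∫ s in Ioi (0 : ℝ), w s * p s ^ 2 := by
  have hsub : Ioc 0 t ⊆ Ioi (0 : ℝ) := Ioc_subset_Ioi_self
  have hw_pos_ae : ∀ᵐ s ∂volume.restrict (Ioi (0 : ℝ)), 0 < w s :=
    ae_restrict_of_forall_mem measurableSet_Ioi hw_pos
  have hinv_nonneg : ∀ s ∈ Ioi (0 : ℝ), 0 ≤ (w s)⁻¹ := fun s hs => (inv_pos.2 (hw_pos s hs)).le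
  have hwp_nonneg : ∀ s ∈ Ioi (0 : ℝ), 0 ≤ w s * p s ^ 2 := fun s hs =>
    mul_nonneg (hw_pos s hs).le (sq_nonneg _)
  rw [intervalIntegral.integral_of_le ht]
  calc (∫ s in Ioc 0 t, p s) ^ 2
      ≤ (∫ s in Ioc 0 t, (w s)⁻¹) * ∫ s in Ioc 0 t, w s * p s ^ 2 :=
        sq_integral_le_integral_inv_mul_integral_mul_sq
          (ae_restrict_of_ae_restrict_of_subset hsub hw_pos_ae) hfp.1.aestronglyMeasurable
          (hfp.2.1.mono_set hsub) (hw_int.mono_set hsub)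
    _ ≤ (∫ s in Ioi (0 : ℝ), (w s)⁻¹) * ∫ s in Ioi (0 : ℝ), w s * p s ^ 2 := by
        gcongr ?_ * ?_
        · exact setIntegral_nonneg measurableSet_Ioc fun s hs => hwp_nonneg s (hsub hs)
        · exact setIntegral_nonneg measurableSet_Ioi hinv_nonneg
        · exact setIntegral_mono_set hw_int
            (ae_restrict_of_forall_mem measurableSet_Ioi hinv_nonneg) hsub.eventuallyLE
        · exact setIntegral_mono_set hfp.2.1
            (ae_restrict_of_forall_mem measurableSet_Ioi hwp_nonneg) hsub.eventuallyLE

theorem sq_apply_le (hfp : IsWPair w f p) (hw_pos : ∀ s ∈ Ioi (0 : ℝ), 0 < w s)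
    (hw_int : IntegrableOn (fun s => (w s)⁻¹) (Ioi 0)) (ht : 0 ≤ t) :
    f t ^ 2 ≤ (1 + ∫ s in Ioi (0 : ℝ), (w s)⁻¹)
      * (f 0 ^ 2 + ∫ s in Ioi (0 : ℝ), w s * p s ^ 2) := by
  rw [hfp.2.2 t ht]
  exact add_sq_le_one_add_mul
    (setIntegral_nonneg measurableSet_Ioi fun s hs => (inv_pos.2 (hw_pos s hs)).le)
    (setIntegral_nonneg measurableSet_Ioi fun s hs => mul_nonneg (hw_pos s hs).le (sq_nonneg _))
    (hfp.sq_intervalIntegral_le hw_pos hw_int ht)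

theorem comp_add_right (hfp : IsWPair w f p) (hw_mono : MonotoneOn w (Ioi 0))
    (hw_pos : ∀ s ∈ Ioi (0 : ℝ), 0 < w s) (hw_int : IntegrableOn (fun s => (w s)⁻¹) (Ioi 0))
    (ht : 0 ≤ t) : IsWPair w (fun x => f (x + t)) (fun x => p (x + t)) := by
  refine ⟨hfp.1.comp (measurable_add_const t), ?_, fun x hx => ?_⟩
  · exact integrableOn_Ioi_mul_comp_add_right (q := fun x => p x ^ 2) hw_mono
      (fun s hs => (hw_pos s hs).le) (hfp.1.pow_const 2).aestronglyMeasurable hfp.2.1 ht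
  · have hp_int {b : ℝ} (hb : 0 ≤ b) : IntervalIntegrable p volume 0 b :=
      (intervalIntegrable_iff_integrableOn_Ioc_of_le hb).2
        ((hfp.integrableOn hw_pos hw_int).mono_set Ioc_subset_Ioi_self)
    have hxt : 0 ≤ x + t := add_nonneg hx ht
    calc f (x + t) = f 0 + ((∫ s in (0 : ℝ)..t, p s) + ∫ s in t..(x + t), p s) := by
          rw [intervalIntegral.integral_add_adjacent_intervals (hp_int ht)
            ((hp_int ht).symm.trans (hp_int hxt)), ← hfp.2.2 _ hxt]
      _ = f (0 + t) + ∫ s in (0 : ℝ)..x, p (s + t) := by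
          rw [intervalIntegral.integral_comp_add_right, zero_add, hfp.2.2 t ht, add_assoc]

theorem setIntegral_mul_sq_comp_add_right_le (hfp : IsWPair w f p)
    (hw_mono : MonotoneOn w (Ioi 0)) (hw_nonneg : ∀ s ∈ Ioi (0 : ℝ), 0 ≤ w s) (ht : 0 ≤ t) :
    ∫ x in Ioi (0 : ℝ), w x * p (x + t) ^ 2 ≤ ∫ x in Ioi (0 : ℝ), w x * p x ^ 2 :=
  setIntegral_Ioi_mul_comp_add_right_le (q := fun x => p x ^ 2) hw_mono hw_nonneg
    (hfp.1.pow_const 2).aestronglyMeasurable (fun _ _ => sq_nonneg _) hfp.2.1 ht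

end IsWPair

theorem shift_semigroup_uniformly_bounded_general {w f p : ℝ → ℝ} {t : ℝ}
    (hw_mono : MonotoneOn w (Ioi 0)) (hw_pos : ∀ s ∈ Ioi (0 : ℝ), 0 < w s)
    (hw_int : IntegrableOn (fun s => (w s)⁻¹) (Ioi 0)) (hfp : IsWPair w f p) (ht : 0 ≤ t) :
    IsWPair w (fun x => f (x + t)) (fun x => p (x + t)) ∧
    f t ^ 2 + (∫ x in Ioi (0 : ℝ), w x * p (x + t) ^ 2)
      ≤ (2 + ∫ s in Ioi (0 : ℝ), (w s)⁻¹)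
        * (f 0 ^ 2 + ∫ x in Ioi (0 : ℝ), w x * p x ^ 2) := by
  refine ⟨hfp.comp_add_right hw_mono hw_pos hw_int ht, ?_⟩
  have point_bound := hfp.sq_apply_le hw_pos hw_int ht
  have density_bound :=
    hfp.setIntegral_mul_sq_comp_add_right_le hw_mono (fun s hs => (hw_pos s hs).le) ht
  linarith [sq_nonneg (f 0)]

/-- Uniform boundedness of the left-shift semigroup on the Filipović space:
for every `w`-pair `(f, p)` and `t ≥ 0`, the shifted pair is a `w`-pair and
`‖S_t f‖_w² ≤ (2 + K) ‖f‖_w²` with `K = ∫₀^∞ w⁻¹`. -/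
theorem shift_semigroup_uniformly_bounded
    (w : ℝ → ℝ) (hw_meas : Measurable w) (hw_mono : MonotoneOn w (Ici 0))
    (hw_ge : ∀ s, 0 ≤ s → 1 ≤ w s) (hw0 : w 0 = 1)
    (hw_int : IntegrableOn (fun s => (w s)⁻¹) (Ioi 0))
    (K : ℝ) (hK : K = ∫ s in Ioi (0:ℝ), (w s)⁻¹)
    (f p : ℝ → ℝ) (hfp : IsWPair w f p) (t : ℝ) (ht : 0 ≤ t) :
    IsWPair w (fun x => f (x + t)) (fun x => p (x + t)) ∧
    f t ^ 2 + (∫ x in Ioi (0:ℝ), w x * p (x + t) ^ 2)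
      ≤ (2 + K) * (f 0 ^ 2 + ∫ x in Ioi (0:ℝ), w x * p x ^ 2) := by
  subst hK
  exact shift_semigroup_uniformly_bounded_general (hw_mono.mono Ioi_subset_Ici_self)
    (fun s hs => one_pos.trans_le (hw_ge s (le_of_lt hs))) hw_int hfp ht
end
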